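/- (Proposition 2, pointwise form) Fix real constants n > 0, R ≥ 0, and γ₀ > 0, and define for α > 0 the decoding error probability e(α) = f_Q( √n · (ln(1 + α·γ₀) − R) / √(1 − (1 + α·γ₀)^{−2}) ), where f_Q is the Gaussian Q-function. Then e is non-increasing in α: if 0 < α' ≤ α*, then e(α*) ≤ e(α'). -/

import Mathlib

open MeasureTheory

/-- The Gaussian Q-function `f_Q(x) = (1/√(2π)) ∫_x^∞ e^{−t²/2} dt`. -/
noncomputable def gaussianQ (x : ℝ) : ℝ :=
  (Real.sqrt (2 * Real.pi))⁻¹ * ∫ t in Set.Ioi x, Real.exp (-t ^ 2 / 2)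

/-! Let `γ = α γ₀` be the signal-to-noise ratio and `V(γ) = 1 - (1 + γ)⁻²`. Since `f_Q` is
antitone, it suffices that `(ln(1 + γ) - R) / √V(γ)` increases with `γ > 0`. The term `-R / √V`
does, because `R ≥ 0` and `V` increases. For the other term, put `u = (1 + γ)⁻²`; then
`ln(1 + γ) / V(γ) = ½ ln u / (u - 1)` is half the slope of the secant of `ln` between `1` and `u`,
which by concavity decreases in `u` and so increases with `γ`. Hence
`ln(1 + γ) / √V = (ln(1 + γ) / V) · √V` is a product of nonnegative increasing functions. -/

open Set

lemma antitone_setIntegral_Ioi {α : Type*} [Preorder α] [MeasurableSpace α] {μ : Measure α}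
    {f : α → ℝ} (hf : Integrable f μ) (hf₀ : 0 ≤ f) :
    Antitone fun x ↦ ∫ t in Ioi x, f t ∂μ := fun _ _ hxy ↦
  setIntegral_mono_set hf.integrableOn (ae_of_all _ hf₀) (Ioi_subset_Ioi hxy).eventuallyLE

lemma integrable_exp_neg_sq_div_two : Integrable fun t : ℝ ↦ Real.exp (-t ^ 2 / 2) := by
  convert integrable_exp_neg_mul_sq (b := 1 / 2) (by norm_num) using 3
  ring

lemma antitone_gaussianQ : Antitone gaussianQ :=
  (antitone_setIntegral_Ioi integrable_exp_neg_sq_div_two fun _ ↦ (Real.exp_pos _).le).const_mul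
    (by positivity)

lemma antitoneOn_log_div_sub_one :
    AntitoneOn (fun u : ℝ ↦ Real.log u / (u - 1)) (Ioi 0 \ {1}) := by
  have slope_eq : slope Real.log 1 = fun u ↦ Real.log u / (u - 1) := by
    funext u
    rw [slope_def_field, Real.log_one, sub_zero]
  exact slope_eq ▸ strictConcaveOn_log_Ioi.concaveOn.slope_anti (mem_Ioi.2 one_pos)

/-- The dispersion `V(γ) = 1 - (1 + γ)⁻²` of the Gaussian channel at signal-to-noise ratio `γ`,
which scales the variance in the finite-blocklength approximation of the decoding error. -/
noncomputable def channelDispersion (γ : ℝ) : ℝ :=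
  1 - ((1 + γ) ^ 2)⁻¹

lemma antitoneOn_inv_one_add_sq : AntitoneOn (fun γ : ℝ ↦ ((1 + γ) ^ 2)⁻¹) (Ioi (-1)) := by
  intro γ hγ δ _ hγδ
  have : 0 < 1 + γ := neg_lt_iff_pos_add'.1 hγ
  dsimp only
  gcongr

lemma monotoneOn_channelDispersion : MonotoneOn channelDispersion (Ioi (-1)) :=
  fun _ hγ _ hδ hγδ ↦ sub_le_sub_left (antitoneOn_inv_one_add_sq hγ hδ hγδ) 1

lemma channelDispersion_pos {γ : ℝ} (hγ : 0 < γ) : 0 < channelDispersion γ :=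
  sub_pos.2 <| inv_lt_one_of_one_lt₀ <| one_lt_pow₀ (lt_add_of_pos_right 1 hγ) two_ne_zero

lemma log_one_add_div_channelDispersion (γ : ℝ) :
    Real.log (1 + γ) / channelDispersion γ =
      Real.log ((1 + γ) ^ 2)⁻¹ / (((1 + γ) ^ 2)⁻¹ - 1) / 2 := by
  rw [channelDispersion, Real.log_inv, Real.log_pow, ← neg_sub 1, neg_div_neg_eq]
  push_cast
  ring

lemma monotoneOn_log_one_add_div_channelDispersion :
    MonotoneOn (fun γ ↦ Real.log (1 + γ) / channelDispersion γ) (Ioi (-1) \ {0}) := by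
  have mapsTo : MapsTo (fun γ : ℝ ↦ ((1 + γ) ^ 2)⁻¹) (Ioi (-1) \ {0}) (Ioi 0 \ {1}) := by
    rintro γ ⟨hγ, hγ₀⟩
    have hpos : 0 < 1 + γ := neg_lt_iff_pos_add'.1 hγ
    refine ⟨mem_Ioi.2 (by positivity), fun h ↦ hγ₀ ?_⟩
    have : 1 + γ = 1 := (pow_eq_one_iff_of_nonneg hpos.le two_ne_zero).1 (inv_eq_one.1 h)
    exact add_eq_left.1 this
  intro γ hγ δ hδ hγδ
  simp only [log_one_add_div_channelDispersion]
  gcongr ?_ / 2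
  exact antitoneOn_log_div_sub_one (mapsTo hδ) (mapsTo hγ)
    (antitoneOn_inv_one_add_sq hγ.1 hδ.1 hγδ)

lemma monotoneOn_log_one_add_div_sqrt_channelDispersion :
    MonotoneOn (fun γ ↦ Real.log (1 + γ) / √(channelDispersion γ)) (Ioi 0) := by
  have eq_mul (γ : ℝ) : Real.log (1 + γ) / √(channelDispersion γ) =
      Real.log (1 + γ) / channelDispersion γ * √(channelDispersion γ) := by
    rw [div_mul_eq_mul_div, mul_div_assoc, Real.sqrt_div_self, div_eq_mul_inv]
  intro γ (hγ : 0 < γ) δ (hδ : 0 < δ) hγδ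
  simp only [eq_mul]
  have hlog : 0 ≤ Real.log (1 + δ) := Real.log_nonneg (by linarith)
  have hV : 0 < channelDispersion δ := channelDispersion_pos hδ
  have hγ' : -1 < γ := neg_one_lt_zero.trans hγ
  have hδ' : -1 < δ := neg_one_lt_zero.trans hδ
  gcongr ?_ * √?_
  · exact monotoneOn_log_one_add_div_channelDispersion
      ⟨hγ', hγ.ne'⟩ ⟨hδ', hδ.ne'⟩ hγδ
  · exact monotoneOn_channelDispersion hγ' hδ' hγδ

lemma monotoneOn_log_one_add_sub_div_sqrt_channelDispersion {R : ℝ} (hR : 0 ≤ R) :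
    MonotoneOn (fun γ ↦ (Real.log (1 + γ) - R) / √(channelDispersion γ)) (Ioi 0) := by
  intro γ hγ δ hδ hγδ
  have hV : 0 < channelDispersion γ := channelDispersion_pos hγ
  have hV_le : channelDispersion γ ≤ channelDispersion δ :=
    monotoneOn_channelDispersion.mono (Ioi_subset_Ioi neg_one_lt_zero.le) hγ hδ hγδ
  simp only [sub_div]
  gcongr ?_ - R / √?_
  exact monotoneOn_log_one_add_div_sqrt_channelDispersion hγ hδ hγδ

/-- (Proposition 2, pointwise form) For `n > 0`, `R ≥ 0`, `γ₀ > 0`, the decoding error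
probability `e(α) = f_Q(√n·(ln(1+α γ₀) − R)/√(1 − (1+α γ₀)^{−2}))` is non-increasing in
the large-scale channel gain `α`: if `0 < α' ≤ α*`, then `e(α*) ≤ e(α')`. -/
theorem stmt9 (n R γ₀ : ℝ) (hn : 0 < n) (hR : 0 ≤ R) (hγ₀ : 0 < γ₀)
    (α' αstar : ℝ) (h' : 0 < α') (hle : α' ≤ αstar) :
    gaussianQ (Real.sqrt n * (Real.log (1 + αstar * γ₀) - R) /
        Real.sqrt (1 - ((1 + αstar * γ₀) ^ 2)⁻¹))
      ≤ gaussianQ (Real.sqrt n * (Real.log (1 + α' * γ₀) - R) /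
        Real.sqrt (1 - ((1 + α' * γ₀) ^ 2)⁻¹)) := by
  have hsnr' : 0 < α' * γ₀ := mul_pos h' hγ₀
  have hsnr : α' * γ₀ ≤ αstar * γ₀ := mul_le_mul_of_nonneg_right hle hγ₀.le
  apply antitone_gaussianQ
  simp only [mul_div_assoc]
  exact mul_le_mul_of_nonneg_left
    (monotoneOn_log_one_add_sub_div_sqrt_channelDispersion hR hsnr' (hsnr'.trans_le hsnr) hsnr)
    n.sqrt_nonneg
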